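/- We have ∑_{n₁ ≥ n₂ ≥ 1} 1 / (binom(2n₁, n₁) · (2n₁+1) · (2n₂)²) = π³ / (324 √3), where the double sum is over integers n₁ ≥ n₂ ≥ 1. -/

import Mathlib

open Real

noncomputable def cc (n : ℕ) : ℝ := 4 ^ n / ((2 * n + 1) * (Nat.centralBinom n : ℝ))
noncomputable def hh (n : ℕ) : ℝ := ∑ k ∈ Finset.range n, 1 / (2 * ((k : ℝ) + 1)) ^ 2
noncomputable def FF (N : ℕ) (t : ℝ) : ℝ :=
  ∑ n ∈ Finset.range N, cc n * (cos t * sin t ^ (2 * n + 1))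
noncomputable def PP (N : ℕ) (t : ℝ) : ℝ :=
  ∑ n ∈ Finset.range N, cc n / (2 * n + 2) * sin t ^ (2 * n + 2)
noncomputable def GG (N : ℕ) (t : ℝ) : ℝ :=
  ∑ n ∈ Finset.range N, cc n * hh n * (cos t * sin t ^ (2 * n + 1))

lemma cc_succ (n : ℕ) : (2 * n + 3) * cc (n + 1) = (2 * n + 2) * cc n := by
  have h := Nat.succ_mul_centralBinom_succ n
  have h' : ((n : ℝ) + 1) * (Nat.centralBinom (n + 1) : ℝ)
      = 2 * (2 * n + 1) * (Nat.centralBinom n : ℝ) := by exact_mod_cast h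
  have p1 : (0 : ℝ) < Nat.centralBinom n := by exact_mod_cast Nat.centralBinom_pos n
  have p2 : (0 : ℝ) < Nat.centralBinom (n + 1) := by exact_mod_cast Nat.centralBinom_pos (n + 1)
  have e : (Nat.centralBinom (n + 1) : ℝ) = 2 * (2 * n + 1) * (Nat.centralBinom n : ℝ) / (n + 1) := by
    field_simp; linarith
  unfold cc
  rw [e, pow_succ]
  push_cast
  field_simp
  ring

lemma cc_nonneg (n : ℕ) : 0 ≤ cc n := by unfold cc; positivity

lemma cc_le (n : ℕ) : cc n ≤ 1 := by
  induction n with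
  | zero => simp [cc]
  | succ k ih =>
    have := cc_succ k
    have h0 := cc_nonneg k
    have h1 := cc_nonneg (k + 1)
    have hk : (0 : ℝ) ≤ k := k.cast_nonneg
    nlinarith

lemma hh_nonneg (n : ℕ) : 0 ≤ hh n := by unfold hh; positivity

lemma hh_succ (n : ℕ) : hh (n + 1) = hh n + 1 / (2 * ((n : ℝ) + 1)) ^ 2 := by
  unfold hh; rw [Finset.sum_range_succ]

lemma hh_le (n : ℕ) : hh n ≤ n := by
  induction n with
  | zero => simp [hh]
  | succ k ih =>
    rw [hh_succ]
    have : 1 / (2 * ((k : ℝ) + 1)) ^ 2 ≤ 1 := by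
      rw [div_le_one (by positivity)]
      have hk : (0 : ℝ) ≤ k := k.cast_nonneg
      nlinarith
    push_cast; linarith

lemma term_deriv (n : ℕ) (t : ℝ) : HasDerivAt (fun t => cos t * sin t ^ (2 * n + 1))
    ((2 * n + 1) * sin t ^ (2 * n) - (2 * n + 2) * sin t ^ (2 * n + 2)) t := by
  have h := (hasDerivAt_cos t).mul ((hasDerivAt_sin t).pow (2 * n + 1))
  refine h.congr_deriv ?_
  have := sin_sq_add_cos_sq t
  have e : cos t * cos t = 1 - sin t ^ 2 := by linarith [sq (cos t)]
  push_cast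
  rw [Pi.pow_apply]
  linear_combination (2 * (n : ℝ) + 1) * sin t ^ (2 * n) * e

lemma FF_deriv (N : ℕ) (t : ℝ) :
    HasDerivAt (FF (N + 1)) (1 - (2 * N + 2) * cc N * sin t ^ (2 * N + 2)) t := by
  induction N with
  | zero =>
    have h := (term_deriv 0 t).const_mul (cc 0)
    have e : FF (0 + 1) = fun t => cc 0 * (cos t * sin t ^ (2 * 0 + 1)) := by
      funext t; simp [FF]
    rw [e]
    refine h.congr_deriv ?_
    simp [cc]
  | succ k ih =>
    have e : FF (k + 1 + 1) = FF (k + 1) + fun t => cc (k + 1) * (cos t * sin t ^ (2 * (k + 1) + 1)) := by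
      funext t; simp [FF, Finset.sum_range_succ]
    rw [e]
    refine (ih.add ((term_deriv (k + 1) t).const_mul (cc (k + 1)))).congr_deriv ?_
    have := cc_succ k
    push_cast
    linear_combination sin t ^ (2 * k + 2) * this

lemma PP_deriv (N : ℕ) (t : ℝ) : HasDerivAt (PP N) (FF N t) t := by
  unfold PP FF
  refine HasDerivAt.fun_sum fun n _ => ?_
  refine (((hasDerivAt_sin t).pow (2 * n + 2)).const_mul _).congr_deriv ?_
  have : (2 * (n : ℝ) + 2) ≠ 0 := by positivity
  push_cast
  try simp only [show 2 * n + 2 - 1 = 2 * n + 1 by omega]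
  field_simp

lemma GG_deriv (N : ℕ) (t : ℝ) :
    HasDerivAt (GG (N + 1)) (PP N t - (2 * N + 2) * (cc N * hh N) * sin t ^ (2 * N + 2)) t := by
  induction N with
  | zero =>
    have e : GG (0 + 1) = fun t => 0 := by
      funext t; simp [GG, hh]
    rw [e]
    refine (hasDerivAt_const t (0 : ℝ)).congr_deriv ?_
    simp [PP, hh]
  | succ k ih =>
    have e : GG (k + 1 + 1) = GG (k + 1) +
        fun t => cc (k + 1) * hh (k + 1) * (cos t * sin t ^ (2 * (k + 1) + 1)) := by
      funext t; simp [GG, Finset.sum_range_succ]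
    have e2 : PP (k + 1) t = PP k t + cc k / (2 * k + 2) * sin t ^ (2 * k + 2) := by
      simp [PP, Finset.sum_range_succ]
    rw [e, e2]
    refine (ih.add ((term_deriv (k + 1) t).const_mul (cc (k + 1) * hh (k + 1)))).congr_deriv ?_
    have h1 := cc_succ k
    have h2 : (2 * (k : ℝ) + 2) * cc k * (hh (k + 1) - hh k) = cc k / (2 * k + 2) := by
      rw [hh_succ]; field_simp; ring
    push_cast
    linear_combination sin t ^ (2 * k + 2) * hh (k + 1) * h1 + sin t ^ (2 * k + 2) * h2

lemma mv {f f' : ℝ → ℝ} {C : ℝ} (hC : 0 ≤ C) (hf : ∀ t, HasDerivAt f (f' t) t) (h0 : f 0 = 0)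
    (hb : ∀ t ∈ Set.Icc 0 (π / 6), |f' t| ≤ C) : ∀ t ∈ Set.Icc 0 (π / 6), |f t| ≤ C := by
  intro t ht
  have := (convex_Icc 0 (π / 6)).norm_image_sub_le_of_norm_hasDerivWithin_le
    (f := f) (f' := f') (C := C) (fun x _ => (hf x).hasDerivWithinAt) hb
    (Set.left_mem_Icc.2 (by positivity)) ht
  rw [h0, sub_zero, sub_zero, norm_eq_abs, norm_eq_abs, abs_of_nonneg ht.1] at this
  have h1 : t ≤ 1 := by linarith [ht.2, pi_le_four]
  nlinarith [ht.1]

lemma sin_bd (N : ℕ) (t : ℝ) (ht : t ∈ Set.Icc 0 (π / 6)) :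
    0 ≤ sin t ^ (2 * N + 2) ∧ sin t ^ (2 * N + 2) ≤ (1 / 4) ^ N := by
  have h0 : 0 ≤ sin t := sin_nonneg_of_nonneg_of_le_pi ht.1 (by linarith [ht.2, pi_pos])
  have h1 : sin t ≤ 1 / 2 := by
    rw [← sin_pi_div_six]
    exact sin_le_sin_of_le_of_le_pi_div_two (by linarith [ht.1, pi_pos]) (by linarith [pi_pos]) ht.2
  refine ⟨by positivity, ?_⟩
  have : sin t ^ (2 * N + 2) = (sin t ^ 2) ^ (N + 1) := by rw [← pow_mul]; ring_nf
  rw [this]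
  calc (sin t ^ 2) ^ (N + 1) ≤ (1 / 4) ^ (N + 1) := by
        apply pow_le_pow_left₀ (by positivity); nlinarith
    _ ≤ (1 / 4) ^ N := pow_le_pow_of_le_one (by norm_num) (by norm_num) (by omega)

lemma F_bd (N : ℕ) : ∀ t ∈ Set.Icc 0 (π / 6), |FF (N + 1) t - t| ≤ (2 * (N : ℝ) + 2) * (1 / 4 : ℝ) ^ N := by
  refine mv (f' := fun t => 1 - (2 * N + 2) * cc N * sin t ^ (2 * N + 2) - 1) (by positivity)
    (fun t => (FF_deriv N t).sub (hasDerivAt_id t)) (by simp [FF]) ?_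
  intro t ht
  obtain ⟨a, b⟩ := sin_bd N t ht
  have c0 := cc_nonneg N
  have c1 := cc_le N
  rw [show ∀ x : ℝ, 1 - x - 1 = -x by intro x; ring, abs_neg, abs_of_nonneg (by positivity)]
  gcongr
  nlinarith [N.cast_nonneg (α := ℝ)]

lemma P_bd (N : ℕ) : ∀ t ∈ Set.Icc (0 : ℝ) (π / 6),
    |PP (N + 1) t - t ^ 2 / 2| ≤ (2 * (N : ℝ) + 2) * (1 / 4 : ℝ) ^ N := by
  refine mv (f' := fun t => FF (N + 1) t - t) (by positivity)
    (fun t => (PP_deriv (N + 1) t).sub ?_) (by simp [PP]) (F_bd N)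
  exact (((hasDerivAt_id t).pow 2).div_const 2).congr_deriv (by simp)

lemma G_bd (N : ℕ) : ∀ t ∈ Set.Icc (0 : ℝ) (π / 6),
    |GG (N + 2) t - t ^ 3 / 6| ≤ (2 * (N : ℝ) + 2) * (1 / 4 : ℝ) ^ N
      + (2 * (N : ℝ) + 4) * ((N : ℝ) + 1) * (1 / 4 : ℝ) ^ (N + 1) := by
  refine mv (f' := fun t => PP (N + 1) t
      - (2 * (N + 1 : ℕ) + 2) * (cc (N + 1) * hh (N + 1)) * sin t ^ (2 * (N + 1) + 2) - t ^ 2 / 2)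
    (by positivity)
    (fun t => (GG_deriv (N + 1) t).sub ?_) (by simp [GG]) ?_
  · exact (((hasDerivAt_id t).pow 3).div_const 6).congr_deriv (by simp; ring)
  intro t ht
  obtain ⟨a, b⟩ := sin_bd (N + 1) t ht
  have c0 := cc_nonneg (N + 1)
  have c1 := cc_le (N + 1)
  have d0 := hh_nonneg (N + 1)
  have d1 := hh_le (N + 1)
  have hp := P_bd N t ht
  have hq : (2 * (N + 1 : ℕ) + 2) * (cc (N + 1) * hh (N + 1)) * sin t ^ (2 * (N + 1) + 2)
      ≤ (2 * (N : ℝ) + 4) * ((N : ℝ) + 1) * (1 / 4 : ℝ) ^ (N + 1) := by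
    have : cc (N + 1) * hh (N + 1) ≤ N + 1 := by
      push_cast at d1; nlinarith
    have e : (2 * ((N + 1 : ℕ) : ℝ) + 2) = 2 * N + 4 := by push_cast; ring
    rw [e]
    gcongr
  have hq0 : 0 ≤ (2 * (N + 1 : ℕ) + 2) * (cc (N + 1) * hh (N + 1)) * sin t ^ (2 * (N + 1) + 2) := by
    positivity
  rw [abs_le] at hp ⊢
  constructor <;> linarith [hp.1, hp.2]

open Filter Topology in
lemma G_lim : Tendsto (fun N => GG N (π / 6)) atTop (𝓝 ((π / 6) ^ 3 / 6)) := by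
  rw [← tendsto_add_atTop_iff_nat 2, tendsto_iff_norm_sub_tendsto_zero]
  refine squeeze_zero (fun _ => norm_nonneg _)
    (fun N => G_bd N _ (Set.right_mem_Icc.2 (by positivity))) ?_
  have h0 : Tendsto (fun n : ℕ => (1 / 4 : ℝ) ^ n) atTop (𝓝 0) :=
    tendsto_pow_atTop_nhds_zero_of_lt_one (by norm_num) (by norm_num)
  have h1 : Tendsto (fun n : ℕ => (n : ℝ) * (1 / 4 : ℝ) ^ n) atTop (𝓝 0) :=
    tendsto_self_mul_const_pow_of_lt_one (by norm_num) (by norm_num)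
  have h2 : Tendsto (fun n : ℕ => (n : ℝ) ^ 2 * (1 / 4 : ℝ) ^ n) atTop (𝓝 0) :=
    tendsto_pow_const_mul_const_pow_of_lt_one 2 (by norm_num) (by norm_num)
  have := ((h2.const_mul (1 / 2)).add (h1.const_mul (7 / 2))).add (h0.const_mul 3)
  simp only [mul_zero, add_zero] at this
  refine this.congr fun n => ?_
  rw [pow_succ]; ring

noncomputable def tt (n : ℕ) : ℝ :=
  ∑ k : Fin n, 1 / ((Nat.choose (2 * n) n : ℝ) * (2 * (n : ℝ) + 1) * (2 * ((k : ℕ) + 1 : ℝ)) ^ 2)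

lemma tt_eq (n : ℕ) : cc n * hh n * (cos (π / 6) * sin (π / 6) ^ (2 * n + 1)) = √3 / 4 * tt n := by
  unfold tt
  rw [Fin.sum_univ_eq_sum_range (fun k => 1 / ((Nat.choose (2 * n) n : ℝ) * (2 * (n : ℝ) + 1)
    * (2 * ((k : ℕ) + 1 : ℝ)) ^ 2)) n]
  unfold cc hh
  rw [cos_pi_div_six, sin_pi_div_six, Nat.centralBinom_eq_two_mul_choose]
  have p1 : (0 : ℝ) < Nat.choose (2 * n) n := by
    exact_mod_cast Nat.choose_pos (by omega)
  rw [Finset.mul_sum, Finset.mul_sum, Finset.sum_mul]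
  refine Finset.sum_congr rfl fun k _ => ?_
  have : (1 / 2 : ℝ) ^ (2 * n + 1) = 1 / (4 ^ n * 2) := by
    rw [pow_succ, pow_mul, div_pow, div_pow]; norm_num; ring
  rw [this]
  field_simp
  ring

lemma tt_hasSum : HasSum tt (π ^ 3 / (324 * √3)) := by
  rw [hasSum_iff_tendsto_nat_of_nonneg (fun n => by unfold tt; positivity)]
  have h := G_lim.const_mul (4 / √3)
  have h3 : (√3) ≠ 0 := by positivity
  have e : 4 / √3 * ((π / 6) ^ 3 / 6) = π ^ 3 / (324 * √3) := by field_simp; ring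
  rw [e] at h
  refine h.congr fun N => ?_
  unfold GG
  rw [Finset.mul_sum]
  refine Finset.sum_congr rfl fun n _ => ?_
  rw [tt_eq]
  field_simp

def ee : (Σ n : ℕ, Fin n) ≃ {p : ℕ × ℕ // p.2 ≤ p.1 ∧ 1 ≤ p.2} where
  toFun x := ⟨(x.1, x.2.1 + 1), by have := x.2.2; constructor <;> simp⟩
  invFun p := ⟨p.1.1, ⟨p.1.2 - 1, by have := p.2; omega⟩⟩
  left_inv x := by simp
  right_inv p := by
    have := p.2
    apply Subtype.ext
    apply Prod.ext
    · rfl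
    · simp; omega

/-- `∑_{n₁ ≥ n₂ ≥ 1} 1/(binom(2n₁,n₁)(2n₁+1)(2n₂)²) = π³/(324√3)`. -/
theorem stmt18 :
    (∑' p : {p : ℕ × ℕ // p.2 ≤ p.1 ∧ 1 ≤ p.2},
      1 / ((Nat.choose (2 * p.1.1) p.1.1 : ℝ) * (2 * (p.1.1 : ℝ) + 1) *
        (2 * (p.1.2 : ℝ)) ^ 2)) =
    π ^ 3 / (324 * Real.sqrt 3) := by
  rw [← ee.tsum_eq]
  have e : ∀ n : ℕ, ∑' k : Fin n, 1 / ((Nat.choose (2 * (ee ⟨n, k⟩).1.1) (ee ⟨n, k⟩).1.1 : ℝ) *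
      (2 * ((ee ⟨n, k⟩).1.1 : ℝ) + 1) * (2 * ((ee ⟨n, k⟩).1.2 : ℝ)) ^ 2) = tt n := by
    intro n
    rw [tsum_fintype]
    simp [ee, tt]
  rw [Summable.tsum_sigma']
  · simp_rw [e]
    exact tt_hasSum.tsum_eq
  · intro n
    exact (hasSum_fintype _).summable
  · rw [summable_sigma_of_nonneg (fun x => by positivity)]
    refine ⟨fun n => (hasSum_fintype _).summable, ?_⟩
    simp_rw [e]
    exact tt_hasSum.summable
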